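/- Let p ∈ (0,1/2], ρ ∈ (0,1) and ε > 0. Let r = log(2/ε)/log(1/ρ) and δ = 10^{−3r−1}·ε³. Suppose f : {0,1}^n → {0,1} is an (r,δ)-global Boolean function with μ_p(f) < δ. Then Stab_ρ(f) ≤ ε·μ_p(f). -/

import Mathlib

open Finset

namespace GlobalHC

variable {n : ℕ}

/-- Expectation with respect to the `p`-biased measure on `{0,1}^n`. -/
noncomputable def Ep (p : ℝ) (f : (Fin n → Bool) → ℝ) : ℝ :=
  ∑ x : Fin n → Bool, (∏ i, if x i then p else 1 - p) * f x

/-- The `r`-norm with respect to the `p`-biased measure. -/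
noncomputable def pnorm (p r : ℝ) (f : (Fin n → Bool) → ℝ) : ℝ :=
  (Ep p fun x => |f x| ^ r) ^ (1 / r)

/-- The `p`-biased character `χ_S`. -/
noncomputable def chi (p : ℝ) (S : Finset (Fin n)) (x : Fin n → Bool) : ℝ :=
  ∏ i ∈ S, ((if x i then (1 : ℝ) else 0) - p) / Real.sqrt (p * (1 - p))

/-- The `p`-biased Fourier coefficient `f̂(S)`. -/
noncomputable def coeff (p : ℝ) (f : (Fin n → Bool) → ℝ) (S : Finset (Fin n)) : ℝ :=
  Ep p fun x => f x * chi p S x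

/-- The derivative `D_S f = Σ_{T ⊇ S} f̂(T) χ_{T∖S}`. -/
noncomputable def derivS (p : ℝ) (S : Finset (Fin n)) (f : (Fin n → Bool) → ℝ) :
    (Fin n → Bool) → ℝ :=
  fun x => ∑ T ∈ Finset.univ.filter (fun T => S ⊆ T), coeff p f T * chi p (T \ S) x

/-- The generalised influence `I_S(f) = σ^{-2|S|} Σ_{T ⊇ S} f̂(T)²`. -/
noncomputable def genInf (p : ℝ) (S : Finset (Fin n)) (f : (Fin n → Bool) → ℝ) : ℝ :=
  (∑ T ∈ Finset.univ.filter (fun T => S ⊆ T), coeff p f T ^ 2) / (p * (1 - p)) ^ S.card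

/-- The noise operator `T_ρ f = Σ_S ρ^{|S|} f̂(S) χ_S`. -/
noncomputable def noise (p ρ : ℝ) (f : (Fin n → Bool) → ℝ) : (Fin n → Bool) → ℝ :=
  fun x => ∑ S : Finset (Fin n), ρ ^ S.card * coeff p f S * chi p S x

/-- The degree-`r` truncation `f^{≤ r}`. -/
noncomputable def trunc (p : ℝ) (r : ℕ) (f : (Fin n → Bool) → ℝ) : (Fin n → Bool) → ℝ :=
  fun x => ∑ S ∈ Finset.univ.filter (fun S : Finset (Fin n) => S.card ≤ r),
    coeff p f S * chi p S x

/-- The restriction `f_{J→1}` setting all coordinates in `J` to `1`. -/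
def restrict1 (J : Finset (Fin n)) (f : (Fin n → Bool) → ℝ) : (Fin n → Bool) → ℝ :=
  fun x => f (fun i => if i ∈ J then true else x i)

/-- `f` is `(r,δ)`-global (for the `p`-biased measure). -/
def IsGlobal (p r δ : ℝ) (f : (Fin n → Bool) → ℝ) : Prop :=
  ∀ J : Finset (Fin n), (J.card : ℝ) ≤ r → Ep p (restrict1 J f) ≤ Ep p f + δ

/-- The total influence `I[f] = Σ_i Pr_{μ_p}[f(x ⊕ e_i) ≠ f(x)]`. -/
noncomputable def totalInf (p : ℝ) (f : (Fin n → Bool) → ℝ) : ℝ :=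
  ∑ i : Fin n, Ep p fun x => if f (Function.update x i (!x i)) = f x then 0 else 1

/-- Noise stability `Stab_ρ(f) = Σ_S ρ^{|S|} f̂(S)²` (w.r.t. `μ_p`). -/
noncomputable def stab (p ρ : ℝ) (f : (Fin n → Bool) → ℝ) : ℝ :=
  ∑ S : Finset (Fin n), ρ ^ S.card * coeff p f S ^ 2

/-- `f` is monotone. -/
def Mono (f : (Fin n → Bool) → ℝ) : Prop :=
  ∀ x y : Fin n → Bool, (∀ i, x i ≤ y i) → f x ≤ f y


lemma Ep_w_nonneg {n : ℕ} {p : ℝ} (hp : 0 < p) (hp' : p ≤ 1/2) (x : Fin n → Bool) :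
    0 ≤ ∏ i, (if x i then p else 1 - p) := by
  apply Finset.prod_nonneg
  intro i _
  split_ifs <;> linarith

lemma Ep_mono {n : ℕ} {p : ℝ} (hp : 0 < p) (hp' : p ≤ 1/2) {F G : (Fin n → Bool) → ℝ}
    (h : ∀ x, F x ≤ G x) : Ep p F ≤ Ep p G := by
  unfold Ep
  exact Finset.sum_le_sum fun x _ => mul_le_mul_of_nonneg_left (h x) (Ep_w_nonneg hp hp' x)

lemma Ep_nonneg {n : ℕ} {p : ℝ} (hp : 0 < p) (hp' : p ≤ 1/2) {F : (Fin n → Bool) → ℝ}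
    (h : ∀ x, 0 ≤ F x) : 0 ≤ Ep p F := by
  unfold Ep
  exact Finset.sum_nonneg fun x _ => mul_nonneg (Ep_w_nonneg hp hp' x) (h x)

lemma Ep_add {n : ℕ} (p : ℝ) (F G : (Fin n → Bool) → ℝ) :
    Ep p (fun x => F x + G x) = Ep p F + Ep p G := by
  unfold Ep
  rw [← Finset.sum_add_distrib]
  exact Finset.sum_congr rfl fun x _ => by ring

lemma Ep_mul {n : ℕ} (p a : ℝ) (F : (Fin n → Bool) → ℝ) :
    Ep p (fun x => a * F x) = a * Ep p F := by
  unfold Ep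
  rw [Finset.mul_sum]
  exact Finset.sum_congr rfl fun x _ => by ring

lemma Ep_sum {n : ℕ} {ι : Type*} (p : ℝ) (s : Finset ι) (F : ι → (Fin n → Bool) → ℝ) :
    Ep p (fun x => ∑ j ∈ s, F j x) = ∑ j ∈ s, Ep p (F j) := by
  unfold Ep
  rw [Finset.sum_comm]
  exact Finset.sum_congr rfl fun x _ => by rw [Finset.mul_sum]

lemma Ep_one {n : ℕ} (p : ℝ) : Ep p (fun _ : Fin n → Bool => 1) = 1 := by
  unfold Ep
  have := Finset.prod_univ_sum (fun _ : Fin n => (Finset.univ : Finset Bool))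
    (fun _ b => if b then p else 1 - p)
  have hu : (Fintype.piFinset fun _ : Fin n => (Finset.univ : Finset Bool)) = Finset.univ := by
    ext; simp
  rw [hu] at this
  simp only [mul_one]
  rw [← this]
  simp

lemma Ep_avg {n : ℕ} (p : ℝ) (i : Fin n) (F : (Fin n → Bool) → ℝ) :
    Ep p F = Ep p (fun x => p * F (Function.update x i true)
      + (1 - p) * F (Function.update x i false)) := by
  unfold Ep
  rw [← sub_eq_zero, ← Finset.sum_sub_distrib]
  set H : (Fin n → Bool) → ℝ := fun x => (∏ i, if x i then p else 1 - p) * F x -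
    (∏ i, if x i then p else 1 - p) * (p * F (Function.update x i true)
      + (1 - p) * F (Function.update x i false)) with hH
  let fl : (Fin n → Bool) → (Fin n → Bool) := fun x => Function.update x i (!x i)
  have hfl : Function.Involutive fl := by
    intro x
    simp [fl]
  have h1 : ∑ x, H (fl x) = ∑ x, H x :=
    Equiv.sum_comp (hfl.toPerm) H
  have h2 : ∀ x, H x + H (fl x) = 0 := by
    intro x
    simp only [hH]
    have e1 : ∀ y : Fin n → Bool, (∏ i, if y i then p else 1 - p) =
      (if y i then p else 1 - p) * ∏ j ∈ Finset.univ.erase i, if y j then p else 1 - p :=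
      fun y => (Finset.mul_prod_erase _ _ (Finset.mem_univ i)).symm
    have e2 : ∏ j ∈ Finset.univ.erase i, (if fl x j then p else 1 - p) =
      ∏ j ∈ Finset.univ.erase i, if x j then p else 1 - p := by
      refine Finset.prod_congr rfl fun j hj => ?_
      simp [fl, Function.update_of_ne (Finset.ne_of_mem_erase hj)]
    rw [e1 x, e1 (fl x), e2]
    have e3 : ∀ b, Function.update (fl x) i b = Function.update x i b := by
      intro b; simp [fl]
    rw [e3, e3]
    cases hx : x i
    · have e4 : Function.update x i false = x := by rw [← hx]; simp
      have e5 : fl x = Function.update x i true := by simp [fl, hx]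
      rw [e4, e5]; simp; ring
    · have e4 : Function.update x i true = x := by rw [← hx]; simp
      have e5 : fl x = Function.update x i false := by simp [fl, hx]
      rw [e4, e5]; simp; ring
  have h3 : ∑ x, H x + ∑ x, H (fl x) = 0 := by
    rw [← Finset.sum_add_distrib]
    exact Finset.sum_eq_zero fun x _ => h2 x
  show ∑ x, H x = 0
  linarith

lemma Ep_cs {n : ℕ} {p : ℝ} (hp : 0 < p) (hp' : p ≤ 1/2) (F G : (Fin n → Bool) → ℝ) :
    (Ep p fun x => F x * G x) ^ 2 ≤ (Ep p fun x => F x ^ 2) * (Ep p fun x => G x ^ 2) := by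
  unfold Ep
  refine Finset.sum_sq_le_sum_mul_sum_of_sq_le_mul _ ?_ ?_ ?_
  · intro x _; exact mul_nonneg (Ep_w_nonneg hp hp' x) (sq_nonneg _)
  · intro x _; exact mul_nonneg (Ep_w_nonneg hp hp' x) (sq_nonneg _)
  · intro x _; exact le_of_eq (by ring)

lemma chi_insert {n : ℕ} (p : ℝ) {i : Fin n} {T : Finset (Fin n)} (hi : i ∉ T)
    (x : Fin n → Bool) : chi p (insert i T) x =
      (((if x i then (1 : ℝ) else 0) - p) / Real.sqrt (p * (1 - p))) * chi p T x := by
  unfold chi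
  rw [Finset.prod_insert hi]

lemma chi_update {n : ℕ} (p : ℝ) {i : Fin n} {T : Finset (Fin n)} (hi : i ∉ T)
    (x : Fin n → Bool) (b : Bool) : chi p T (Function.update x i b) = chi p T x := by
  unfold chi
  refine Finset.prod_congr rfl fun j hj => ?_
  rw [Function.update_of_ne]
  rintro rfl; exact hi hj

/-- Fourier sum over subsets of `U`. -/
noncomputable def FS {n : ℕ} (p : ℝ) (U : Finset (Fin n)) (c : Finset (Fin n) → ℝ)
    (x : Fin n → Bool) : ℝ := ∑ T ∈ U.powerset, c T * chi p T x

lemma FS_update {n : ℕ} (p : ℝ) {i : Fin n} {U : Finset (Fin n)} (hi : i ∉ U)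
    (c : Finset (Fin n) → ℝ) (x : Fin n → Bool) (b : Bool) :
    FS p U c (Function.update x i b) = FS p U c x := by
  unfold FS
  refine Finset.sum_congr rfl fun T hT => ?_
  rw [chi_update p fun h => hi (Finset.mem_powerset.1 hT h)]

lemma FS_insert {n : ℕ} (p : ℝ) {i : Fin n} {U : Finset (Fin n)} (hi : i ∉ U)
    (c : Finset (Fin n) → ℝ) (x : Fin n → Bool) :
    FS p (insert i U) c x = FS p U c x +
      (((if x i then (1 : ℝ) else 0) - p) / Real.sqrt (p * (1 - p))) *
        FS p U (fun T => c (insert i T)) x := by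
  unfold FS
  rw [Finset.sum_powerset_insert hi, Finset.mul_sum]
  congr 1
  refine Finset.sum_congr rfl fun T hT => ?_
  rw [chi_insert p fun h => hi (Finset.mem_powerset.1 hT h)]
  ring

lemma FS_sq {n : ℕ} {p : ℝ} (hp : 0 < p) (hp' : p ≤ 1/2) (U : Finset (Fin n)) :
    ∀ c : Finset (Fin n) → ℝ, Ep p (fun x => FS p U c x ^ 2) = ∑ T ∈ U.powerset, c T ^ 2 := by
  induction U using Finset.induction_on with
  | empty =>
    intro c
    have := Ep_mul (n := n) p (c ∅ ^ 2) (fun _ => 1)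
    rw [Ep_one] at this
    simpa [FS, chi] using this
  | insert i U hi ih =>
    intro c
    rw [Finset.sum_powerset_insert hi, ← ih, ← ih (fun T => c (insert i T)), ← Ep_add,
      Ep_avg p i]
    congr 1
    funext x
    simp only [FS_insert p hi, FS_update p hi, Function.update_self]
    have hs : 0 < p * (1 - p) := by nlinarith
    have hq : Real.sqrt (p * (1 - p)) ^ 2 = p * (1 - p) := Real.sq_sqrt hs.le
    have hs' : Real.sqrt (p * (1 - p)) ≠ 0 := (Real.sqrt_pos.2 hs).ne'
    set s := Real.sqrt (p * (1 - p))
    generalize FS p U c x = a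
    generalize FS p U (fun T => c (insert i T)) x = b
    simp
    field_simp
    ring_nf
    rw [hq]
    ring

lemma two_point {p s a b e h : ℝ} (hp : 0 < p) (hp' : p ≤ 1/2) (hs : 0 < s)
    (hq : s ^ 2 = p * (1 - p)) :
    p * ((a + (1 - p) / s * b) ^ 2 * (e + (1 - p) / s * h) ^ 2) +
      (1 - p) * ((a + (0 - p) / s * b) ^ 2 * (e + (0 - p) / s * h) ^ 2) ≤
    a ^ 2 * e ^ 2 + 4 * (a ^ 2 * h ^ 2) + 4 * (b ^ 2 * e ^ 2)
      + 3 / (p * (1 - p)) * (b ^ 2 * h ^ 2) := by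
  have key : p * ((a + (1 - p) / s * b) ^ 2 * (e + (1 - p) / s * h) ^ 2) +
      (1 - p) * ((a + (0 - p) / s * b) ^ 2 * (e + (0 - p) / s * h) ^ 2) =
      a ^ 2 * e ^ 2 + (a^2*h^2 + b^2*e^2 + 4*(a*h)*(b*e))
       + 2 * ((1 - 2*p)/s * (b*h)) * (a*h) + 2 * ((1 - 2*p)/s * (b*h)) * (b*e)
       + (1 / s^2 - 3) * (b^2*h^2) := by
    have hs' := hs.ne'
    field_simp
    have h4 : s ^ 4 = (p * (1 - p))^2 := by rw [← hq]; ring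
    have h3 : s ^ 3 = s * (p * (1 - p)) := by rw [← hq]; ring
    ring_nf
    simp only [h4, h3, hq]
    ring
  have hm : ((1 - 2*p)/s * (b*h))^2 = (1 / s^2 - 4) * (b^2*h^2) := by
    have hs' := hs.ne'
    rw [mul_pow, div_pow]
    have : (1 - 2*p)^2 = 1 - 4 * s^2 := by rw [hq]; ring
    rw [this]
    field_simp
  rw [key, ← hq]
  have h3 : 3 / s ^ 2 = 3 * (1 / s^2) := by ring
  rw [h3]
  generalize (1 - 2*p)/s * (b*h) = m at *
  generalize 1 / s^2 = t at *
  nlinarith [sq_nonneg (m - a*h), sq_nonneg (m - b*e), sq_nonneg (a*h - b*e), sq_nonneg (b*h)]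

/-- weighted upper sums -/
noncomputable def BS {n : ℕ} (U S : Finset (Fin n)) (c : Finset (Fin n) → ℝ) : ℝ :=
  ∑ T ∈ U.powerset, if S ⊆ T then 4 ^ T.card * c T ^ 2 else 0

lemma BS_insert1 {n : ℕ} {i : Fin n} {U S : Finset (Fin n)} (hi : i ∉ U) (hS : S ⊆ U)
    (c : Finset (Fin n) → ℝ) :
    BS (insert i U) S c = BS U S c + 4 * BS U S (fun T => c (insert i T)) := by
  unfold BS
  rw [Finset.sum_powerset_insert hi, Finset.mul_sum]
  congr 1
  refine Finset.sum_congr rfl fun T hT => ?_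
  have hiT : i ∉ T := fun h => hi (Finset.mem_powerset.1 hT h)
  have hiS : i ∉ S := fun h => hi (hS h)
  simp only [Finset.subset_insert_iff_of_notMem hiS, Finset.card_insert_of_notMem hiT]
  split_ifs <;> ring

lemma BS_insert2 {n : ℕ} {i : Fin n} {U S : Finset (Fin n)} (hi : i ∉ U) (hS : S ⊆ U)
    (c : Finset (Fin n) → ℝ) :
    BS (insert i U) (insert i S) c = 4 * BS U S (fun T => c (insert i T)) := by
  unfold BS
  rw [Finset.sum_powerset_insert hi, Finset.mul_sum]
  rw [Finset.sum_eq_zero, zero_add]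
  · refine Finset.sum_congr rfl fun T hT => ?_
    have hiT : i ∉ T := fun h => hi (Finset.mem_powerset.1 hT h)
    have hiS : i ∉ S := fun h => hi (hS h)
    simp only [Finset.insert_subset_insert_iff hiS, Finset.card_insert_of_notMem hiT]
    split_ifs <;> ring
  · intro T hT
    have hiT : i ∉ T := fun h => hi (Finset.mem_powerset.1 hT h)
    rw [if_neg]
    intro h
    exact hiT (h (Finset.mem_insert_self _ _))

lemma hyper {n : ℕ} {p : ℝ} (hp : 0 < p) (hp' : p ≤ 1/2) (U : Finset (Fin n)) :
    ∀ c d : Finset (Fin n) → ℝ, Ep p (fun x => FS p U c x ^ 2 * FS p U d x ^ 2) ≤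
      ∑ S ∈ U.powerset, (3 / 16 / (p * (1 - p))) ^ S.card * (BS U S c * BS U S d) := by
  induction U using Finset.induction_on with
  | empty =>
    intro c d
    have := Ep_mul (n := n) p (c ∅ ^ 2 * d ∅ ^ 2) (fun _ => 1)
    rw [Ep_one] at this
    simp at this
    simp [FS, chi, BS, this]
  | insert i U hi ih =>
    intro c d
    have hs : 0 < p * (1 - p) := by nlinarith
    have hq : Real.sqrt (p * (1 - p)) ^ 2 = p * (1 - p) := Real.sq_sqrt hs.le
    have hs' : 0 < Real.sqrt (p * (1 - p)) := (Real.sqrt_pos.2 hs)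
    have step : Ep p (fun x => FS p (insert i U) c x ^ 2 * FS p (insert i U) d x ^ 2) ≤
      Ep p (fun x => FS p U c x ^ 2 * FS p U d x ^ 2)
      + 4 * Ep p (fun x => FS p U c x ^ 2 * FS p U (fun T => d (insert i T)) x ^ 2)
      + 4 * Ep p (fun x => FS p U (fun T => c (insert i T)) x ^ 2 * FS p U d x ^ 2)
      + 3 / (p * (1 - p)) * Ep p (fun x => FS p U (fun T => c (insert i T)) x ^ 2 *
          FS p U (fun T => d (insert i T)) x ^ 2) := by
      rw [← Ep_mul, ← Ep_mul, ← Ep_mul, ← Ep_add, ← Ep_add, ← Ep_add, Ep_avg p i]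
      refine Ep_mono hp hp' fun x => ?_
      simp only [FS_insert p hi, FS_update p hi, Function.update_self]
      simpa using two_point hp hp' hs' hq
    refine step.trans ?_
    have i1 := ih c d
    have i2 := ih c (fun T => d (insert i T))
    have i3 := ih (fun T => c (insert i T)) d
    have i4 := ih (fun T => c (insert i T)) (fun T => d (insert i T))
    have hK : 0 ≤ 3 / (p * (1 - p)) := by positivity
    have i4' := mul_le_mul_of_nonneg_left i4 hK
    have heq : ∑ S ∈ (insert i U).powerset, (3 / 16 / (p * (1 - p))) ^ S.card *
        (BS (insert i U) S c * BS (insert i U) S d) =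
      ∑ S ∈ U.powerset, (3 / 16 / (p * (1 - p))) ^ S.card * (BS U S c * BS U S d)
      + 4 * ∑ S ∈ U.powerset, (3 / 16 / (p * (1 - p))) ^ S.card *
          (BS U S c * BS U S (fun T => d (insert i T)))
      + 4 * ∑ S ∈ U.powerset, (3 / 16 / (p * (1 - p))) ^ S.card *
          (BS U S (fun T => c (insert i T)) * BS U S d)
      + 16 * ∑ S ∈ U.powerset, (3 / 16 / (p * (1 - p))) ^ S.card *
          (BS U S (fun T => c (insert i T)) * BS U S (fun T => d (insert i T)))
      + 3 / (p * (1 - p)) * ∑ S ∈ U.powerset, (3 / 16 / (p * (1 - p))) ^ S.card *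
          (BS U S (fun T => c (insert i T)) * BS U S (fun T => d (insert i T))) := by
      rw [Finset.sum_powerset_insert hi]
      simp only [Finset.mul_sum]
      rw [← Finset.sum_add_distrib, ← Finset.sum_add_distrib, ← Finset.sum_add_distrib,
        ← Finset.sum_add_distrib, ← Finset.sum_add_distrib]
      refine Finset.sum_congr rfl fun S hS => ?_
      have hS' := Finset.mem_powerset.1 hS
      rw [BS_insert1 hi hS', BS_insert1 hi hS', BS_insert2 hi hS', BS_insert2 hi hS',
        Finset.card_insert_of_notMem (fun h => hi (hS' h)), pow_succ]
      ring
    rw [heq]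
    have hBn : ∀ S (c : Finset (Fin n) → ℝ), 0 ≤ BS U S c := by
      intro S c
      exact Finset.sum_nonneg fun T _ => by split_ifs <;> positivity
    have h16 : 0 ≤ ∑ S ∈ U.powerset, (3 / 16 / (p * (1 - p))) ^ S.card *
          (BS U S (fun T => c (insert i T)) * BS U S (fun T => d (insert i T))) :=
      Finset.sum_nonneg fun S _ => mul_nonneg (by positivity) (mul_nonneg (hBn _ _) (hBn _ _))
    linarith

lemma Ep_mul_FS {n : ℕ} (p : ℝ) (h : (Fin n → Bool) → ℝ) (U : Finset (Fin n))
    (c : Finset (Fin n) → ℝ) :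
    Ep p (fun x => h x * FS p U c x) = ∑ T ∈ U.powerset, c T * coeff p h T := by
  unfold FS coeff
  have : ∀ T ∈ U.powerset, c T * Ep p (fun x => h x * chi p T x) =
      Ep p (fun x => c T * (h x * chi p T x)) := fun T _ => (Ep_mul _ _ _).symm
  rw [Finset.sum_congr rfl this, ← Ep_sum]
  congr 1
  funext x
  rw [Finset.mul_sum]
  exact Finset.sum_congr rfl fun T _ => by ring

lemma bessel {n : ℕ} {p : ℝ} (hp : 0 < p) (hp' : p ≤ 1/2) (h : (Fin n → Bool) → ℝ) :
    ∑ T, coeff p h T ^ 2 ≤ Ep p (fun x => h x ^ 2) := by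
  have h0 : 0 ≤ Ep p (fun x => (h x - FS p Finset.univ (coeff p h) x) ^ 2) :=
    Ep_nonneg hp hp' fun x => sq_nonneg _
  have e : (fun x => (h x - FS p Finset.univ (coeff p h) x) ^ 2) =
    fun x => h x ^ 2 + ((-2) * (h x * FS p Finset.univ (coeff p h) x)
      + FS p Finset.univ (coeff p h) x ^ 2) := by funext x; ring
  rw [e, Ep_add, Ep_add, Ep_mul, Ep_mul_FS, FS_sq hp hp'] at h0
  simp only [Finset.powerset_univ, ← pow_two] at h0
  linarith

/-- discrete derivative -/
def Di {n : ℕ} (i : Fin n) (h : (Fin n → Bool) → ℝ) (x : Fin n → Bool) : ℝ :=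
  h (Function.update x i true) - h (Function.update x i false)

lemma coeff_insert {n : ℕ} {p : ℝ} (hp : 0 < p) (hp' : p ≤ 1/2) {i : Fin n}
    {T : Finset (Fin n)} (hi : i ∉ T) (h : (Fin n → Bool) → ℝ) :
    coeff p h (insert i T) = Real.sqrt (p * (1 - p)) * coeff p (Di i h) T := by
  have hs : 0 < p * (1 - p) := by nlinarith
  have hq : Real.sqrt (p * (1 - p)) ^ 2 = p * (1 - p) := Real.sq_sqrt hs.le
  have hs' : Real.sqrt (p * (1 - p)) ≠ 0 := (Real.sqrt_pos.2 hs).ne'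
  unfold coeff
  rw [Ep_avg p i, ← Ep_mul]
  congr 1
  funext x
  simp only [chi_insert p hi, chi_update p hi, Function.update_self, Di]
  set s := Real.sqrt (p * (1 - p))
  simp
  field_simp
  rw [hq]
  ring

lemma restrict1_Di {n : ℕ} {i : Fin n} {J : Finset (Fin n)} (hi : i ∉ J)
    (h : (Fin n → Bool) → ℝ) : restrict1 J (Di i h) = Di i (restrict1 J h) := by
  funext x
  unfold restrict1 Di
  congr 2 <;>
  · funext j
    by_cases hj : j = i
    · subst hj; simp [hi]
    · simp [hj]

lemma restrict1_update {n : ℕ} {i : Fin n} {J : Finset (Fin n)}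
    (h : (Fin n → Bool) → ℝ) (x : Fin n → Bool) :
    restrict1 J h (Function.update x i true) = restrict1 (insert i J) h x := by
  unfold restrict1
  congr 1
  funext j
  by_cases hj : j = i
  · subst hj; simp
  · simp [hj]

lemma Di_sq {n : ℕ} {p : ℝ} (hp : 0 < p) (hp' : p ≤ 1/2) (i : Fin n)
    (h : (Fin n → Bool) → ℝ) : Ep p (fun x => Di i h x ^ 2) ≤
      2 * Ep p (fun x => h (Function.update x i true) ^ 2) + 4 * Ep p (fun x => h x ^ 2) := by
  rw [Ep_avg p i (fun x => h x ^ 2), ← Ep_mul, ← Ep_mul, ← Ep_add]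
  refine Ep_mono hp hp' fun x => ?_
  unfold Di
  generalize h (Function.update x i true) = a
  generalize h (Function.update x i false) = b
  nlinarith [sq_nonneg (a + b), mul_nonneg hp.le (sq_nonneg a),
    mul_nonneg (by linarith : 0 ≤ 1 / 2 - p) (sq_nonneg b)]

lemma genInf_bound {n : ℕ} {p : ℝ} (hp : 0 < p) (hp' : p ≤ 1/2) (S : Finset (Fin n)) :
    ∀ (h : (Fin n → Bool) → ℝ) (M : ℝ),
      (∀ J ⊆ S, Ep p (fun x => restrict1 J h x ^ 2) ≤ 2 ^ J.card * M) →
      ∑ T : Finset (Fin n), (if S ⊆ T then coeff p h T ^ 2 else 0) ≤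
        (8 * (p * (1 - p))) ^ S.card * M := by
  induction S using Finset.induction_on with
  | empty =>
    intro h M hM
    have := hM ∅ (Finset.Subset.refl _)
    simp [restrict1] at this
    simpa using (bessel hp hp' h).trans this
  | insert i S hi ih =>
    intro h M hM
    have hs : 0 < p * (1 - p) := by nlinarith
    have hq : Real.sqrt (p * (1 - p)) ^ 2 = p * (1 - p) := Real.sq_sqrt hs.le
    have h1 := ih (Di i h) (8 * M) (by
      intro J hJ
      have hiJ : i ∉ J := fun h => hi (hJ h)
      rw [restrict1_Di hiJ]
      refine (Di_sq hp hp' i _).trans ?_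
      simp only [restrict1_update]
      have a1 := hM (insert i J) (Finset.insert_subset_insert i hJ)
      have a2 := hM J (hJ.trans (Finset.subset_insert _ _))
      rw [Finset.card_insert_of_notMem hiJ, pow_succ] at a1
      linarith)
    have h2 : ∑ T : Finset (Fin n), (if insert i S ⊆ T then coeff p h T ^ 2 else 0) ≤
        (p * (1 - p)) * ∑ T : Finset (Fin n), (if S ⊆ T then coeff p (Di i h) T ^ 2 else 0) := by
      have hu : (Finset.univ : Finset (Finset (Fin n))) =
          (insert i (Finset.univ.erase i)).powerset := by
        rw [Finset.insert_erase (Finset.mem_univ i), Finset.powerset_univ]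
      rw [hu, Finset.sum_powerset_insert (Finset.notMem_erase _ _),
        Finset.sum_powerset_insert (Finset.notMem_erase _ _)]
      have z : ∑ T ∈ (Finset.univ.erase i).powerset,
          (if insert i S ⊆ T then coeff p h T ^ 2 else 0) = 0 := by
        refine Finset.sum_eq_zero fun T hT => ?_
        rw [if_neg]
        intro h
        exact Finset.notMem_erase i _ (Finset.mem_powerset.1 hT (h (Finset.mem_insert_self _ _)))
      rw [z, zero_add, mul_add]
      have z2 : 0 ≤ (p * (1 - p)) * ∑ T ∈ (Finset.univ.erase i).powerset,
          (if S ⊆ insert i T then coeff p (Di i h) (insert i T) ^ 2 else 0) :=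
        mul_nonneg hs.le (Finset.sum_nonneg fun T _ => by split_ifs <;> positivity)
      refine le_trans (le_of_eq ?_) (le_add_of_nonneg_right z2)
      rw [Finset.mul_sum]
      refine Finset.sum_congr rfl fun T hT => ?_
      have hiT : i ∉ T := fun h => Finset.notMem_erase i _ (Finset.mem_powerset.1 hT h)
      simp only [Finset.insert_subset_insert_iff hi, coeff_insert hp hp' hiT, mul_pow, hq]
      split_ifs <;> ring
    rw [Finset.card_insert_of_notMem hi, pow_succ]
    have h3 := mul_le_mul_of_nonneg_left h1 hs.le
    linarith

lemma fourth {n : ℕ} {p : ℝ} (hp : 0 < p) (hp' : p ≤ 1/2) (d : ℕ) (γ : ℝ)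
    (c : Finset (Fin n) → ℝ) (hc : ∀ T, d < T.card → c T = 0)
    (hγ : ∀ S : Finset (Fin n), S.card ≤ d →
      ∑ T : Finset (Fin n), (if S ⊆ T then c T ^ 2 else 0) ≤ (p * (1 - p)) ^ S.card * γ)
    (hγ0 : 0 ≤ γ) :
    Ep p (fun x => FS p Finset.univ c x ^ 4) ≤ 19 ^ d * γ * ∑ T, c T ^ 2 := by
  have hs : 0 < p * (1 - p) := by nlinarith
  have h1 := hyper hp hp' Finset.univ c c
  have e : (fun x => FS p Finset.univ c x ^ 4) =
    fun x => FS p Finset.univ c x ^ 2 * FS p Finset.univ c x ^ 2 := by funext x; ring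
  rw [e]
  refine h1.trans ?_
  rw [Finset.powerset_univ]
  have hB : ∀ S : Finset (Fin n), BS Finset.univ S c ≤
      4 ^ d * ∑ T : Finset (Fin n), (if S ⊆ T then c T ^ 2 else 0) := by
    intro S
    unfold BS
    rw [Finset.powerset_univ, Finset.mul_sum]
    refine Finset.sum_le_sum fun T _ => ?_
    split_ifs
    · by_cases hT : d < T.card
      · simp [hc T hT]
      · have : (4:ℝ) ^ T.card ≤ 4 ^ d := pow_le_pow_right₀ (by norm_num) (not_lt.1 hT)
        exact mul_le_mul_of_nonneg_right this (sq_nonneg _)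
    · simp
  have hBn : ∀ S : Finset (Fin n), 0 ≤ BS Finset.univ S c := fun S =>
    Finset.sum_nonneg fun T _ => by split_ifs <;> positivity
  have hAn : ∀ S : Finset (Fin n),
      0 ≤ ∑ T : Finset (Fin n), (if S ⊆ T then c T ^ 2 else 0) := fun S =>
    Finset.sum_nonneg fun T _ => by split_ifs <;> positivity
  have hterm : ∀ S : Finset (Fin n), (3 / 16 / (p * (1 - p))) ^ S.card *
      (BS Finset.univ S c * BS Finset.univ S c) ≤
      16 ^ d * γ * ((3 / 16) ^ S.card *
        ∑ T : Finset (Fin n), (if S ⊆ T then c T ^ 2 else 0)) := by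
    intro S
    set A := ∑ T : Finset (Fin n), (if S ⊆ T then c T ^ 2 else 0) with hA
    have b1 : BS Finset.univ S c * BS Finset.univ S c ≤ (4 ^ d * A) * (4 ^ d * A) :=
      mul_le_mul (hB S) (hB S) (hBn S) (le_trans (hBn S) (hB S))
    have b2 : A * A ≤ (p * (1 - p)) ^ S.card * γ * A := by
      by_cases hS : S.card ≤ d
      · exact mul_le_mul_of_nonneg_right (hγ S hS) (hAn S)
      · have : A = 0 := by
          refine Finset.sum_eq_zero fun T _ => ?_
          split_ifs with h
          · rw [hc T (lt_of_lt_of_le (not_le.1 hS) (Finset.card_le_card h))]; simp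
          · rfl
        rw [this]; simp
    have b3 : (4:ℝ) ^ d * 4 ^ d = 16 ^ d := by rw [← mul_pow]; norm_num
    calc (3 / 16 / (p * (1 - p))) ^ S.card * (BS Finset.univ S c * BS Finset.univ S c)
        ≤ (3 / 16 / (p * (1 - p))) ^ S.card * ((4 ^ d * 4 ^ d) *
            ((p * (1 - p)) ^ S.card * γ * A)) := by
          refine mul_le_mul_of_nonneg_left (b1.trans ?_) (by positivity)
          have := mul_le_mul_of_nonneg_left b2 (by positivity : (0:ℝ) ≤ 4 ^ d * 4 ^ d)
          linarith
      _ = ((3 / 16 / (p * (1 - p))) ^ S.card * (p * (1 - p)) ^ S.card) *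
            (16 ^ d * γ * A) := by rw [b3]; ring
      _ = 16 ^ d * γ * ((3 / 16) ^ S.card * A) := by
          rw [← mul_pow, div_mul_cancel₀ _ hs.ne']; ring
  refine (Finset.sum_le_sum fun S _ => hterm S).trans ?_
  rw [← Finset.mul_sum]
  have hswap : ∑ S : Finset (Fin n), ((3 / 16 : ℝ) ^ S.card *
        ∑ T : Finset (Fin n), (if S ⊆ T then c T ^ 2 else 0)) =
      ∑ T : Finset (Fin n), (19 / 16 : ℝ) ^ T.card * c T ^ 2 := by
    simp only [Finset.mul_sum]
    rw [Finset.sum_comm]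
    refine Finset.sum_congr rfl fun T _ => ?_
    have := Finset.sum_pow_mul_eq_add_pow (3 / 16 : ℝ) 1 T
    norm_num at this
    rw [← this, Finset.sum_mul]
    have e2 : T.powerset = Finset.univ.filter (fun S => S ⊆ T) := by ext; simp
    rw [e2, Finset.sum_filter]
    refine Finset.sum_congr rfl fun S _ => ?_
    split_ifs <;> simp
  rw [hswap]
  have hfin : ∑ T : Finset (Fin n), (19 / 16 : ℝ) ^ T.card * c T ^ 2 ≤
      (19 / 16) ^ d * ∑ T, c T ^ 2 := by
    rw [Finset.mul_sum]
    refine Finset.sum_le_sum fun T _ => ?_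
    by_cases hT : d < T.card
    · simp [hc T hT]
    · have : (19 / 16:ℝ) ^ T.card ≤ (19 / 16) ^ d :=
        pow_le_pow_right₀ (by norm_num) (not_lt.1 hT)
      exact mul_le_mul_of_nonneg_right this (sq_nonneg _)
  refine (mul_le_mul_of_nonneg_left hfin (by positivity)).trans (le_of_eq ?_)
  have : (19:ℝ) ^ d = 16 ^ d * (19 / 16) ^ d := by rw [← mul_pow]; norm_num
  rw [this]; ring

lemma level {n : ℕ} {p : ℝ} (hp : 0 < p) (hp' : p ≤ 1/2) (d : ℕ) (δ : ℝ) (hδ0 : 0 ≤ δ)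
    (f : (Fin n → Bool) → ℝ) (hbool : ∀ x, f x = 0 ∨ f x = 1)
    (hmeas : Ep p f ≤ δ)
    (hglob : ∀ J : Finset (Fin n), J.card ≤ d → Ep p (restrict1 J f) ≤ 2 * δ) :
    (∑ T : Finset (Fin n), if T.card ≤ d then coeff p f T ^ 2 else 0) ^ 3 ≤
      Ep p f ^ 3 * (152 ^ d * δ) := by
  have hsq : ∀ x, f x ^ 2 = f x := by
    intro x; rcases hbool x with h | h <;> simp [h]
  have hs : 0 < p * (1 - p) := by nlinarith
  set c : Finset (Fin n) → ℝ := fun T => if T.card ≤ d then coeff p f T else 0 with hcdef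
  have hcsq : ∀ T, c T ^ 2 = if T.card ≤ d then coeff p f T ^ 2 else 0 := by
    intro T; simp only [hcdef]; split_ifs <;> simp
  have hinf : ∀ S : Finset (Fin n), S.card ≤ d →
      ∑ T : Finset (Fin n), (if S ⊆ T then c T ^ 2 else 0) ≤
        (p * (1 - p)) ^ S.card * (8 ^ d * δ) := by
    intro S hS
    have h1 := genInf_bound hp hp' S f δ (by
      intro J hJ
      have e : (fun x => restrict1 J f x ^ 2) = restrict1 J f := by
        funext x; exact hsq _
      rw [e]
      rcases J.eq_empty_or_nonempty with rfl | hne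
      · have : restrict1 ∅ f = f := by funext x; simp [restrict1]
        rw [this]; simpa using hmeas
      · refine (hglob J ((Finset.card_le_card hJ).trans hS)).trans ?_
        refine mul_le_mul_of_nonneg_right ?_ hδ0
        have : (2:ℝ)^1 ≤ 2 ^ J.card :=
          pow_le_pow_right₀ (by norm_num) (Finset.card_pos.2 hne)
        simpa using this)
    have h2 : ∑ T : Finset (Fin n), (if S ⊆ T then c T ^ 2 else 0) ≤
        ∑ T : Finset (Fin n), (if S ⊆ T then coeff p f T ^ 2 else 0) := by
      refine Finset.sum_le_sum fun T _ => ?_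
      rw [hcsq]
      split_ifs <;> first | exact le_rfl | positivity
    refine h2.trans (h1.trans ?_)
    rw [mul_pow]
    have : (8:ℝ) ^ S.card ≤ 8 ^ d := pow_le_pow_right₀ (by norm_num) hS
    have := mul_le_mul_of_nonneg_right this
      (by positivity : 0 ≤ (p * (1 - p)) ^ S.card * δ)
    linarith
  have h4 := fourth hp hp' d (8 ^ d * δ) c (by
    intro T hT; simp [hcdef, not_le.2 hT]) hinf (by positivity)
  have hW : Ep p (fun x => f x * FS p Finset.univ c x) = ∑ T, c T ^ 2 := by
    rw [Ep_mul_FS, Finset.powerset_univ]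
    refine Finset.sum_congr rfl fun T _ => ?_
    simp only [hcdef]; split_ifs <;> ring
  rw [← Finset.sum_congr rfl fun T _ => hcsq T]
  set W := ∑ T, c T ^ 2 with hWdef
  have hW0 : 0 ≤ W := Finset.sum_nonneg fun T _ => sq_nonneg _
  have hμ : 0 ≤ Ep p f := Ep_nonneg hp hp' fun x => by rw [← hsq]; positivity
  set g := FS p Finset.univ c with hg
  have c1 := Ep_cs hp hp' f (fun x => f x * g x)
  have c2 := Ep_cs hp hp' f (fun x => g x ^ 2)
  have e1 : (fun x => f x * (f x * g x)) = fun x => f x * g x := by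
    funext x; rw [← mul_assoc, ← pow_two, hsq]
  have e2 : (fun x => (f x * g x) ^ 2) = fun x => f x * g x ^ 2 := by
    funext x; rw [mul_pow, hsq]
  have e3 : (fun x => f x ^ 2) = f := funext hsq
  have e4 : (fun x => (g x ^ 2) ^ 2) = fun x => g x ^ 4 := by funext x; ring
  simp only [e1, e2] at c1
  rw [e3] at c1 c2
  rw [e4] at c2
  rw [hW] at c1
  set V := Ep p (fun x => f x * g x ^ 2)
  set Q := Ep p (fun x => g x ^ 4)
  set μ := Ep p f
  have e5 : (152:ℝ) ^ d = 19 ^ d * 8 ^ d := by rw [← mul_pow]; norm_num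
  have k1 : W ^ 4 ≤ μ ^ 3 * (152 ^ d * δ) * W := by
    calc W ^ 4 = (W ^ 2) ^ 2 := by ring
      _ ≤ (μ * V) ^ 2 := pow_le_pow_left₀ (sq_nonneg _) c1 2
      _ = μ ^ 2 * V ^ 2 := by ring
      _ ≤ μ ^ 2 * (μ * (19 ^ d * (8 ^ d * δ) * W)) :=
        mul_le_mul_of_nonneg_left (c2.trans (mul_le_mul_of_nonneg_left h4 hμ)) (sq_nonneg _)
      _ = _ := by rw [e5]; ring
  rcases hW0.eq_or_lt with h | h
  · rw [← h, zero_pow (by norm_num)]; positivity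
  · refine le_of_mul_le_mul_right ?_ h
    calc W ^ 3 * W = W ^ 4 := by ring
      _ ≤ _ := k1

/-- sparse global Boolean functions are noise sensitive (Theorem 5.1). -/
theorem statement15 {n : ℕ} (p ρ ε r δ : ℝ) (hp : 0 < p) (hp' : p ≤ 1/2)
    (hρ : 0 < ρ) (hρ' : ρ < 1) (hε : 0 < ε)
    (hr : r = Real.log (2 / ε) / Real.log (1 / ρ))
    (hδ : δ = (10 : ℝ) ^ (-(3 * r) - 1) * ε ^ 3)
    (f : (Fin n → Bool) → ℝ) (hbool : ∀ x, f x = 0 ∨ f x = 1)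
    (hglob : IsGlobal p r δ f) (hmeas : Ep p f < δ) :
    stab p ρ f ≤ ε * Ep p f := by
  have hsq : (fun x => f x ^ 2) = f := by
    funext x; rcases hbool x with h | h <;> simp [h]
  have hμ : 0 ≤ Ep p f := by
    rw [← hsq]; exact Ep_nonneg hp hp' fun x => sq_nonneg _
  have hbes := bessel hp hp' f
  rw [hsq] at hbes
  rcases le_or_gt 1 ε with h1 | h1
  · calc stab p ρ f ≤ ∑ S, coeff p f S ^ 2 := by
          refine Finset.sum_le_sum fun S _ => ?_
          exact mul_le_of_le_one_left (sq_nonneg _) (pow_le_one₀ hρ.le hρ'.le)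
      _ ≤ Ep p f := hbes
      _ ≤ ε * Ep p f := le_mul_of_one_le_left hμ h1
  have hlρ : 0 < Real.log (1 / ρ) := Real.log_pos (by rw [lt_div_iff₀ hρ]; linarith)
  have hlε : 0 < Real.log (2 / ε) := Real.log_pos (by rw [lt_div_iff₀ hε]; linarith)
  have hr0 : 0 < r := by rw [hr]; exact div_pos hlε hlρ
  have hδ0 : 0 < δ := by rw [hδ]; positivity
  have hρr : ρ ^ r = ε / 2 := by
    have h2 : r * Real.log (1 / ρ) = Real.log (2 / ε) := by rw [hr]; field_simp
    rw [Real.rpow_def_of_pos hρ]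
    have h3 : Real.log ρ * r = Real.log (ε / 2) := by
      have a : Real.log (1 / ρ) = - Real.log ρ := by rw [one_div, Real.log_inv]
      have b : Real.log (2 / ε) = - Real.log (ε / 2) := by rw [← Real.log_inv, inv_div]
      rw [a, b] at h2
      linarith
    rw [h3, Real.exp_log (by positivity)]
  set d := ⌊r⌋₊ with hd
  have hdr : (d : ℝ) ≤ r := Nat.floor_le hr0.le
  have hlev := level hp hp' d δ hδ0.le f hbool hmeas.le (by
    intro J hJ
    have := hglob J (le_trans (by exact_mod_cast hJ) hdr)
    linarith)
  have hconst : 152 ^ d * δ ≤ (ε / 2) ^ 3 := by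
    have a : (10:ℝ) ^ (-(3 * r) - 1) ≤ (10:ℝ) ^ (-(3 * (d:ℝ)) - 1) :=
      Real.rpow_le_rpow_of_exponent_le (by norm_num) (by linarith)
    have b : (10:ℝ) ^ (-(3 * (d:ℝ)) - 1) = ((1000:ℝ) ^ d)⁻¹ / 10 := by
      rw [Real.rpow_sub (by norm_num), Real.rpow_neg (by norm_num), Real.rpow_mul (by norm_num),
        Real.rpow_natCast, Real.rpow_one]
      norm_num
    have c : (152:ℝ) ^ d ≤ 1000 ^ d := pow_le_pow_left₀ (by norm_num) (by norm_num) d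
    have e : (152:ℝ) ^ d * ((1000:ℝ) ^ d)⁻¹ ≤ 1 := by
      rw [← div_eq_mul_inv, div_le_one (by positivity)]; exact c
    rw [b] at a
    have h3 : 0 < ε ^ 3 := by positivity
    calc 152 ^ d * δ ≤ 152 ^ d * (((1000:ℝ) ^ d)⁻¹ / 10 * ε ^ 3) := by
          rw [hδ]; gcongr
      _ = (152 ^ d * ((1000:ℝ) ^ d)⁻¹) * (ε ^ 3 / 10) := by ring
      _ ≤ 1 * (ε ^ 3 / 10) := by gcongr
      _ ≤ (ε / 2) ^ 3 := by
        rw [div_pow]; linarith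
  have hW : (∑ T : Finset (Fin n), if T.card ≤ d then coeff p f T ^ 2 else 0) ≤
      ε / 2 * Ep p f := by
    refine le_of_pow_le_pow_left₀ (n := 3) (by norm_num) (by positivity) (hlev.trans ?_)
    rw [mul_pow, mul_comm]
    exact mul_le_mul_of_nonneg_right hconst (by positivity)
  have hsplit : stab p ρ f ≤ (∑ T : Finset (Fin n), if T.card ≤ d then coeff p f T ^ 2 else 0)
      + ε / 2 * ∑ T, coeff p f T ^ 2 := by
    unfold stab
    rw [Finset.mul_sum, ← Finset.sum_add_distrib]
    refine Finset.sum_le_sum fun S _ => ?_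
    split_ifs with h
    · have a := mul_le_of_le_one_left (sq_nonneg (coeff p f S))
        (pow_le_one₀ (n := S.card) hρ.le hρ'.le)
      have b : 0 ≤ ε / 2 * coeff p f S ^ 2 := by positivity
      linarith
    · rw [zero_add, ← hρr]
      refine mul_le_mul_of_nonneg_right ?_ (sq_nonneg _)
      rw [← Real.rpow_natCast]
      refine Real.rpow_le_rpow_of_exponent_ge hρ hρ'.le ?_
      exact (Nat.lt_of_floor_lt (not_le.1 h)).le
  have hb2 : ε / 2 * ∑ T, coeff p f T ^ 2 ≤ ε / 2 * Ep p f :=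
    mul_le_mul_of_nonneg_left hbes (by positivity)
  linarith

end GlobalHC
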